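/- Split-IRV does not respect cohesive majorities. Concretely, consider the 37-voter profile over {a,b,c,d} with 9 votes {a,b,c} ≻ {d}, 5 votes {a,b} ≻ {d} ≻ {c}, 5 votes {a,c} ≻ {d} ≻ {b}, 8 votes {b,c,d} ≻ {a}, and 10 votes {d} ≻ {a,b,c}. The 19 voters of the first three groups form a majority all ranking a in their top indifference class, and the union of their top sets is {a,b,c}; yet d ∈ SplitIRV(P), violating respect for cohesive majorities. -/

import Mathlib

/-!
Under split scoring, a voter gives `1 / |T|` points to each member of their top class `T` among the
remaining candidates `A`, unless `T = A`, in which case nobody gets anything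
(`splitScoring_eq`). With this the scores are:

* on `{a, b, c, d}`: `a` has `8`, `b` and `c` have `49/6`, `d` has `38/3`, so `a` is eliminated;
* on `{b, c, d}`: `b` and `c` have `19/2`, `d` has `10`, so `b` may be eliminated;
* on `{c, d}`: `c` has `14`, `d` has `15`, so `c` is eliminated and `d` wins.

Here the eight voters `{b, c, d} ≻ {a}` are fully indifferent once `a` is gone. The majority
approving `a` splits its points among `a`, `b`, `c`, and this is what eliminates `a`, while
`d` lies outside the union of its top sets.
-/

open Finset

attribute [local instance] Classical.propDecidable

/-- A weak order on a candidate type `C`: a complete and transitive binary relation. -/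
structure WeakOrder (C : Type*) where
  rel : C → C → Prop
  total : ∀ a b, rel a b ∨ rel b a
  trans : ∀ a b c, rel a b → rel b c → rel a c

namespace WeakOrder

variable {C : Type*}

/-- Strict preference. -/
def strict (w : WeakOrder C) (a b : C) : Prop :=
  w.rel a b ∧ ¬ w.rel b a

/-- Indifference. -/
def indiff (w : WeakOrder C) (a b : C) : Prop :=
  w.rel a b ∧ w.rel b a

/-- The set of top-ranked candidates of `w` within the candidate set `A`. -/
noncomputable def topSet (w : WeakOrder C) (A : Finset C) : Finset C :=
  A.filter fun c => ∀ d ∈ A, w.rel c d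

variable [DecidableEq C]

/-- Number of candidates in `A` strictly preferred to `a`. -/
noncomputable def cardAbove (w : WeakOrder C) (A : Finset C) (a : C) : ℕ :=
  (A.filter fun b => w.strict b a).card

/-- The (0-based) index of the indifference class of `a` within `A`
(0 = top indifference class). -/
noncomputable def classIdx (w : WeakOrder C) (A : Finset C) (a : C) : ℕ :=
  ((A.filter fun b => w.strict b a).image (w.cardAbove A)).card

/-- The number of indifference classes of `w` on `A`. -/
noncomputable def numClasses (w : WeakOrder C) (A : Finset C) : ℕ :=
  (A.image (w.cardAbove A)).card

/-- The order type of `w` on `A`: the list of sizes of its indifference classes,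
from the top class downwards. -/
noncomputable def orderType (w : WeakOrder C) (A : Finset C) : List ℕ :=
  (List.range (w.numClasses A)).map fun j => (A.filter fun a => w.classIdx A a = j).card

end WeakOrder

/-- Weak order induced by a rank function (smaller rank = more preferred). -/
def ofRank {C : Type*} (ρ : C → ℕ) : WeakOrder C where
  rel a b := ρ a ≤ ρ b
  total a b := le_total _ _
  trans _ _ _ hab hbc := le_trans hab hbc

section Rules

variable {C N : Type*} [DecidableEq C] [Fintype N]

/-- The score of candidate `a` in profile `P` on remaining candidate set `A`,
under the scoring system `s` (which maps an order type and a 0-based class index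
to a real score). -/
noncomputable def totalScore (s : List ℕ → ℕ → ℝ) (P : N → WeakOrder C)
    (A : Finset C) (a : C) : ℝ :=
  ∑ i : N, s ((P i).orderType A) ((P i).classIdx A a)

/-- The set of lowest-scoring candidates in `A`. -/
noncomputable def lowest (s : List ℕ → ℕ → ℝ) (P : N → WeakOrder C)
    (A : Finset C) : Finset C :=
  A.filter fun c => ∀ d ∈ A, totalScore s P A c ≤ totalScore s P A d

/-- Fuel-based helper for the elimination scoring rule. -/
noncomputable def winnersAux (s : List ℕ → ℕ → ℝ) (P : N → WeakOrder C) :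
    ℕ → Finset C → Finset C
  | 0, A => A
  | n + 1, A =>
    if A.card ≤ 1 then A
    else (lowest s P A).biUnion fun c => winnersAux s P n (A.erase c)

/-- The elimination scoring rule associated with scoring system `s`: repeatedly
eliminate a lowest-scoring candidate (parallel-universe tie-breaking) until one
candidate remains. -/
noncomputable def winners (s : List ℕ → ℕ → ℝ) (P : N → WeakOrder C)
    (A : Finset C) : Finset C :=
  winnersAux s P A.card A

/-- Approval score: the number of voters ranking `c` in their top indifference
class within `A`. -/
noncomputable def approvalScore (P : N → WeakOrder C) (A : Finset C) (c : C) : ℕ :=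
  (Finset.univ.filter fun i => c ∈ (P i).topSet A).card

end Rules

/-- The approval scoring system: `s(τ) = (1,0,…,0)` for every order type `τ`
(with `s(τ) = (0)` when `|τ| = 1`). -/
noncomputable def approvalScoring : List ℕ → ℕ → ℝ :=
  fun τ j => if j = 0 ∧ 2 ≤ τ.length then 1 else 0

/-- The split scoring system: `s(τ) = (1/τ(1),0,…,0)` for every order type `τ`
(with `s(τ) = (0)` when `|τ| = 1`). -/
noncomputable def splitScoring : List ℕ → ℕ → ℝ :=
  fun τ j => if j = 0 ∧ 2 ≤ τ.length then ((τ.headI : ℝ))⁻¹ else 0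

/-- The Borda-style scoring system:
`s(τ) = (m−1, m−1−τ(1), …, m−1−∑_{i<k−1} τ(i))` where `m = τ.sum`. -/
noncomputable def bordaScoring : List ℕ → ℕ → ℝ :=
  fun τ j => ((τ.sum : ℝ) - 1) - (((τ.take j).sum : ℕ) : ℝ)

/-- Nonnegativity of a scoring system. -/
def NonnegSys (s : List ℕ → ℕ → ℝ) : Prop := ∀ τ j, 0 ≤ s τ j

/-- The last score value of every (nonempty) order type is zero. -/
def LastZeroSys (s : List ℕ → ℕ → ℝ) : Prop :=
  ∀ τ : List ℕ, τ ≠ [] → s τ (τ.length - 1) = 0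

/-- Monotonicity of a scoring system: earlier indifference classes get weakly
higher scores. -/
def MonotoneSys (s : List ℕ → ℕ → ℝ) : Prop :=
  ∀ τ i j, i ≤ j → s τ j ≤ s τ i

section CloneHoverEtc

variable {C N : Type*}

/-- `X` is a clone set in the profile `P` relative to ambient candidate set `A`. -/
def IsCloneSet (P : N → WeakOrder C) (A X : Finset C) : Prop :=
  X ⊆ A ∧ ∀ i : N, ∀ c ∈ A, c ∉ X →
    (∀ x ∈ X, (P i).strict x c) ∨ (∀ x ∈ X, (P i).indiff x c) ∨
      (∀ x ∈ X, (P i).strict c x)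

/-- `w2` is obtained from `w` by a `c`-hover: `c` is alone in its (non-top)
indifference class in `w`, and in `w2` it is merged into the indifference class
directly above it, everything else being unchanged. -/
def IsCHover (w w2 : WeakOrder C) (c : C) : Prop :=
  (∀ x, x ≠ c → ¬ w.indiff c x) ∧
  (∃ b, w.strict b c) ∧
  (∀ a b, a ≠ c → (w2.rel a b ↔ w.rel a b)) ∧
  (∀ b, w2.rel c b ↔ (w.rel c b ∨ ((w.strict b c) ∧ ∀ y, w.strict y c → w.rel b y)))

/-- The sincere coarsening of `w` merging all candidates strictly preferred to
`b` into a single top indifference class, leaving the rest unchanged. -/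
def mergeAbove (w : WeakOrder C) (b : C) : WeakOrder C where
  rel u v := w.strict u b ∨ (¬ w.strict v b ∧ w.rel u v)
  total u v := by
    by_cases hu : w.strict u b
    · exact Or.inl (Or.inl hu)
    · by_cases hv : w.strict v b
      · exact Or.inr (Or.inl hv)
      · rcases w.total u v with h | h
        · exact Or.inl (Or.inr ⟨hv, h⟩)
        · exact Or.inr (Or.inr ⟨hu, h⟩)
  trans u v x huv hvx := by
    rcases huv with h | ⟨hv, huv⟩
    · exact Or.inl h
    · rcases hvx with h | ⟨hx, hvx⟩
      · exact absurd h hv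
      · exact Or.inr ⟨hx, w.trans _ _ _ huv hvx⟩

/-- Pairwise majority margin of `a` over `b`. -/
noncomputable def margin [Fintype N] (P : N → WeakOrder C) (a b : C) : ℤ :=
  ((Finset.univ.filter fun i => (P i).strict a b).card : ℤ) -
    ((Finset.univ.filter fun i => (P i).strict b a).card : ℤ)

end CloneHoverEtc

section STV

variable {C N : Type*} [DecidableEq C] [Fintype C] [Fintype N]

/-- The supporters of `c` among remaining candidates `R`: voters with `c` in
their top indifference class within `R`. -/
noncomputable def suppSet (P : N → WeakOrder C) (R : Finset C) (c : C) : Finset N :=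
  Finset.univ.filter fun i => ∀ d ∈ R, (P i).rel c d

/-- A state of the Approval-STV computation: remaining candidates, selected
candidates, and the budget of each voter. -/
structure STVState (C N : Type*) where
  R : Finset C
  W : Finset C
  b : N → ℝ

/-- One step of Approval-STV with quota `q`: either select an eligible candidate
(whose supporters hold strictly more than `q` budget), charging its supporters a
total of exactly `q`, or, if no candidate is eligible, eliminate some candidate. -/
inductive STVStep (P : N → WeakOrder C) (q : ℝ) : STVState C N → STVState C N → Prop
  | select (R W : Finset C) (b b' : N → ℝ) (c : C) (hc : c ∈ R)
      (helig : q < ∑ i ∈ suppSet P R c, b i)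
      (hpay : ∀ i ∉ suppSet P R c, b' i = b i)
      (hdec : ∀ i : N, b' i ≤ b i)
      (hnn : ∀ i : N, 0 ≤ b' i)
      (htot : ∑ i ∈ suppSet P R c, b' i = (∑ i ∈ suppSet P R c, b i) - q) :
      STVStep P q ⟨R, W, b⟩ ⟨R.erase c, insert c W, b'⟩
  | eliminate (R W : Finset C) (b : N → ℝ) (c : C) (hc : c ∈ R)
      (hnone : ∀ c' ∈ R, (∑ i ∈ suppSet P R c', b i) ≤ q) :
      STVStep P q ⟨R, W, b⟩ ⟨R.erase c, W, b⟩

/-- `W` is a possible outcome of an execution of Approval-STV with quota `q`: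
starting from all candidates remaining, empty committee and unit budgets, some
sequence of steps ends with no candidate remaining and committee `W`. -/
def IsSTVOutcome (P : N → WeakOrder C) (q : ℝ) (W : Finset C) : Prop :=
  ∃ b : N → ℝ,
    Relation.ReflTransGen (STVStep P q) ⟨Finset.univ, ∅, fun _ => 1⟩ ⟨∅, W, b⟩

/-- The closure of `T` with respect to the voter group `S`. -/
noncomputable def closureSet (P : N → WeakOrder C) (S : Finset N) (T : Finset C) :
    Finset C :=
  Finset.univ.filter fun c => ∃ i ∈ S, ∃ t ∈ T, (P i).rel c t

end STV

/-- A weak order is `T`-supporting if every member of `T` is ranked weakly above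
every non-member. -/
def IsTSupporting {C : Type*} (w : WeakOrder C) (T : Finset C) : Prop :=
  ∀ t ∈ T, ∀ c, c ∉ T → w.rel t c

/-- The 37-voter profile over `a = 0`, `b = 1`, `c = 2`, `d = 3`:
9 votes `{a,b,c} ≻ {d}`, 5 votes `{a,b} ≻ {d} ≻ {c}`, 5 votes `{a,c} ≻ {d} ≻ {b}`,
8 votes `{b,c,d} ≻ {a}`, 10 votes `{d} ≻ {a,b,c}`. -/
def majProfile : Fin 37 → WeakOrder (Fin 4) := fun i =>
  if i.val < 9 then ofRank ![0, 0, 0, 1]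
  else if i.val < 14 then ofRank ![0, 0, 2, 1]
  else if i.val < 19 then ofRank ![0, 2, 0, 1]
  else if i.val < 27 then ofRank ![1, 0, 0, 0]
  else ofRank ![1, 1, 1, 0]

theorem WeakOrder.mem_topSet {C : Type*} (w : WeakOrder C) (A : Finset C) (a : C) :
    a ∈ w.topSet A ↔ a ∈ A ∧ ∀ d ∈ A, w.rel a d := by
  simp [WeakOrder.topSet]

theorem WeakOrder.above_eq_empty_iff {C : Type*} [DecidableEq C] (w : WeakOrder C) (A : Finset C)
    {a : C} (ha : a ∈ A) : (A.filter fun b => w.strict b a) = ∅ ↔ a ∈ w.topSet A := by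
  rw [w.mem_topSet, Finset.filter_eq_empty_iff]
  constructor
  · intro h
    refine ⟨ha, fun d hd => ?_⟩
    by_contra hn
    exact h hd ⟨(w.total a d).resolve_left hn, hn⟩
  · rintro ⟨-, h⟩ d hd hs
    exact hs.2 (h d hd)

theorem WeakOrder.classIdx_eq_zero_iff {C : Type*} [DecidableEq C] (w : WeakOrder C)
    (A : Finset C) {a : C} (ha : a ∈ A) : w.classIdx A a = 0 ↔ a ∈ w.topSet A := by
  rw [← w.above_eq_empty_iff A ha, WeakOrder.classIdx, Finset.card_eq_zero,
    Finset.image_eq_empty]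

theorem WeakOrder.cardAbove_eq_zero_iff {C : Type*} [DecidableEq C] (w : WeakOrder C)
    (A : Finset C) {a : C} (ha : a ∈ A) : w.cardAbove A a = 0 ↔ a ∈ w.topSet A := by
  rw [← w.above_eq_empty_iff A ha, WeakOrder.cardAbove, Finset.card_eq_zero]

/-- Given that the top class is inhabited (by `a`), there are at least two indifference classes
exactly when the top class is not all of `A`. -/
theorem WeakOrder.two_le_numClasses_iff {C : Type*} [DecidableEq C] (w : WeakOrder C)
    (A : Finset C) {a : C} (ha : a ∈ w.topSet A) : 2 ≤ w.numClasses A ↔ w.topSet A ≠ A := by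
  have haA : a ∈ A := ((w.mem_topSet A a).1 ha).1
  constructor
  · intro h hT
    have hsub : A.image (w.cardAbove A) ⊆ {0} := by
      intro x hx
      obtain ⟨y, hy, rfl⟩ := Finset.mem_image.1 hx
      rw [Finset.mem_singleton, w.cardAbove_eq_zero_iff A hy, hT]
      exact hy
    have hcard := Finset.card_le_card hsub
    rw [Finset.card_singleton] at hcard
    unfold WeakOrder.numClasses at h
    omega
  · intro hT
    obtain ⟨x, hxA, hxT⟩ : ∃ x ∈ A, x ∉ w.topSet A := by
      by_contra! hall
      exact hT (Finset.Subset.antisymm (Finset.filter_subset _ _) hall)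
    refine Finset.one_lt_card.2 ⟨_, Finset.mem_image_of_mem _ haA, _,
      Finset.mem_image_of_mem _ hxA, fun he => hxT ?_⟩
    rw [← w.cardAbove_eq_zero_iff A hxA, ← he, w.cardAbove_eq_zero_iff A haA]
    exact ha

/-- Split scoring in terms of top sets: each candidate of the top set `T` gets `1 / |T|`, all others
get `0`, and everyone gets `0` from a fully indifferent voter. -/
theorem splitScoring_eq {C : Type*} [DecidableEq C] (w : WeakOrder C) (A : Finset C) {a : C}
    (ha : a ∈ A) :
    splitScoring (w.orderType A) (w.classIdx A a) =
      if a ∈ w.topSet A ∧ w.topSet A ≠ A then ((w.topSet A).card : ℝ)⁻¹ else 0 := by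
  have hlen : (w.orderType A).length = w.numClasses A := by simp [WeakOrder.orderType]
  have hiff : (w.classIdx A a = 0 ∧ 2 ≤ (w.orderType A).length) ↔
      (a ∈ w.topSet A ∧ w.topSet A ≠ A) := by
    rw [hlen, w.classIdx_eq_zero_iff A ha]
    exact and_congr_right fun hT => w.two_le_numClasses_iff A hT
  unfold splitScoring
  by_cases h : a ∈ w.topSet A ∧ w.topSet A ≠ A
  · rw [if_pos h, if_pos (hiff.2 h)]
    have h2 := (hiff.2 h).2
    rw [hlen] at h2
    obtain ⟨m, hm⟩ : ∃ m, w.numClasses A = m + 1 := ⟨w.numClasses A - 1, by omega⟩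
    have hhead : (w.orderType A).headI = (w.topSet A).card := by
      rw [WeakOrder.orderType, hm, List.range_succ_eq_map, List.map_cons, List.headI_cons]
      congr 1
      ext x
      rw [Finset.mem_filter]
      constructor
      · rintro ⟨hx, h0⟩
        exact (w.classIdx_eq_zero_iff A hx).1 h0
      · intro hx
        have hxA := ((w.mem_topSet A x).1 hx).1
        exact ⟨hxA, (w.classIdx_eq_zero_iff A hxA).2 hx⟩
    rw [hhead]
  · rw [if_neg h, if_neg (mt hiff.1 h)]

theorem sum_majProfile (f : WeakOrder (Fin 4) → ℝ) :
    ∑ i, f (majProfile i) =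
      9 * f (ofRank ![0, 0, 0, 1]) + 5 * f (ofRank ![0, 0, 2, 1]) +
      5 * f (ofRank ![0, 2, 0, 1]) + 8 * f (ofRank ![1, 0, 0, 0]) +
      10 * f (ofRank ![1, 1, 1, 0]) := by
  simp [Fin.sum_univ_succ, majProfile]
  ring

theorem topSet_univ :
    (ofRank ![0, 0, 0, 1]).topSet (Finset.univ : Finset (Fin 4)) = {0, 1, 2} ∧
    (ofRank ![0, 0, 2, 1]).topSet (Finset.univ : Finset (Fin 4)) = {0, 1} ∧
    (ofRank ![0, 2, 0, 1]).topSet (Finset.univ : Finset (Fin 4)) = {0, 2} ∧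
    (ofRank ![1, 0, 0, 0]).topSet (Finset.univ : Finset (Fin 4)) = {1, 2, 3} ∧
    (ofRank ![1, 1, 1, 0]).topSet (Finset.univ : Finset (Fin 4)) = {3} := by
  refine ⟨?_, ?_, ?_, ?_, ?_⟩ <;> ext x <;> fin_cases x <;>
    simp [WeakOrder.mem_topSet, ofRank, Fin.forall_fin_succ]

theorem topSet_bcd :
    (ofRank ![0, 0, 0, 1]).topSet ({1, 2, 3} : Finset (Fin 4)) = {1, 2} ∧
    (ofRank ![0, 0, 2, 1]).topSet ({1, 2, 3} : Finset (Fin 4)) = {1} ∧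
    (ofRank ![0, 2, 0, 1]).topSet ({1, 2, 3} : Finset (Fin 4)) = {2} ∧
    (ofRank ![1, 0, 0, 0]).topSet ({1, 2, 3} : Finset (Fin 4)) = {1, 2, 3} ∧
    (ofRank ![1, 1, 1, 0]).topSet ({1, 2, 3} : Finset (Fin 4)) = {3} := by
  refine ⟨?_, ?_, ?_, ?_, ?_⟩ <;> ext x <;> fin_cases x <;>
    simp [WeakOrder.mem_topSet, ofRank]

theorem topSet_cd :
    (ofRank ![0, 0, 0, 1]).topSet ({2, 3} : Finset (Fin 4)) = {2} ∧
    (ofRank ![0, 0, 2, 1]).topSet ({2, 3} : Finset (Fin 4)) = {3} ∧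
    (ofRank ![0, 2, 0, 1]).topSet ({2, 3} : Finset (Fin 4)) = {2} ∧
    (ofRank ![1, 0, 0, 0]).topSet ({2, 3} : Finset (Fin 4)) = {2, 3} ∧
    (ofRank ![1, 1, 1, 0]).topSet ({2, 3} : Finset (Fin 4)) = {3} := by
  refine ⟨?_, ?_, ?_, ?_, ?_⟩ <;> ext x <;> fin_cases x <;>
    simp [WeakOrder.mem_topSet, ofRank]

theorem totalScore_majProfile (A : Finset (Fin 4)) {a : Fin 4} (ha : a ∈ A) :
    totalScore splitScoring majProfile A a =
      ∑ i, if a ∈ (majProfile i).topSet A ∧ (majProfile i).topSet A ≠ A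
        then (((majProfile i).topSet A).card : ℝ)⁻¹ else 0 :=
  Finset.sum_congr rfl fun i _ => splitScoring_eq (majProfile i) A ha

theorem scores_univ :
    totalScore splitScoring majProfile Finset.univ 0 = 8 ∧
    totalScore splitScoring majProfile Finset.univ 1 = 49 / 6 ∧
    totalScore splitScoring majProfile Finset.univ 2 = 49 / 6 ∧
    totalScore splitScoring majProfile Finset.univ 3 = 38 / 3 := by
  obtain ⟨h1, h2, h3, h4, h5⟩ := topSet_univ
  -- Inequalities of explicit finsets are witnessed by cardinality.
  have n1 : ({0, 1, 2} : Finset (Fin 4)) ≠ Finset.univ := ne_of_apply_ne Finset.card (by simp)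
  have n2 : ({0, 1} : Finset (Fin 4)) ≠ Finset.univ := ne_of_apply_ne Finset.card (by simp)
  have n3 : ({0, 2} : Finset (Fin 4)) ≠ Finset.univ := ne_of_apply_ne Finset.card (by simp)
  have n4 : ({1, 2, 3} : Finset (Fin 4)) ≠ Finset.univ := ne_of_apply_ne Finset.card (by simp)
  have n5 : ({3} : Finset (Fin 4)) ≠ Finset.univ := ne_of_apply_ne Finset.card (by simp)
  refine ⟨?_, ?_, ?_, ?_⟩ <;>
  · rw [totalScore_majProfile _ (Finset.mem_univ _), sum_majProfile fun w =>
      if _ ∈ w.topSet Finset.univ ∧ w.topSet Finset.univ ≠ Finset.univ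
        then ((w.topSet Finset.univ).card : ℝ)⁻¹ else 0]
    simp only [h1, h2, h3, h4, h5]
    simp [n1, n2, n3, n4, n5]
    try norm_num

theorem scores_bcd :
    totalScore splitScoring majProfile {1, 2, 3} 1 = 19 / 2 ∧
    totalScore splitScoring majProfile {1, 2, 3} 2 = 19 / 2 ∧
    totalScore splitScoring majProfile {1, 2, 3} 3 = 10 := by
  obtain ⟨h1, h2, h3, h4, h5⟩ := topSet_bcd
  have n1 : ({1, 2} : Finset (Fin 4)) ≠ {1, 2, 3} := ne_of_apply_ne Finset.card (by simp)
  have n2 : ({1} : Finset (Fin 4)) ≠ {1, 2, 3} := ne_of_apply_ne Finset.card (by simp)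
  have n3 : ({2} : Finset (Fin 4)) ≠ {1, 2, 3} := ne_of_apply_ne Finset.card (by simp)
  have n5 : ({3} : Finset (Fin 4)) ≠ {1, 2, 3} := ne_of_apply_ne Finset.card (by simp)
  refine ⟨?_, ?_, ?_⟩ <;>
  · rw [totalScore_majProfile _ (by simp), sum_majProfile fun w =>
      if _ ∈ w.topSet {1, 2, 3} ∧ w.topSet {1, 2, 3} ≠ {1, 2, 3}
        then ((w.topSet {1, 2, 3}).card : ℝ)⁻¹ else 0]
    simp only [h1, h2, h3, h4, h5]
    simp [n1, n2, n3, n5]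
    try norm_num

theorem scores_cd :
    totalScore splitScoring majProfile {2, 3} 2 = 14 ∧
    totalScore splitScoring majProfile {2, 3} 3 = 15 := by
  obtain ⟨h1, h2, h3, h4, h5⟩ := topSet_cd
  have n1 : ({2} : Finset (Fin 4)) ≠ {2, 3} := ne_of_apply_ne Finset.card (by simp)
  have n2 : ({3} : Finset (Fin 4)) ≠ {2, 3} := ne_of_apply_ne Finset.card (by simp)
  refine ⟨?_, ?_⟩ <;>
  · rw [totalScore_majProfile _ (by simp), sum_majProfile fun w =>
      if _ ∈ w.topSet {2, 3} ∧ w.topSet {2, 3} ≠ {2, 3}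
        then ((w.topSet {2, 3}).card : ℝ)⁻¹ else 0]
    simp only [h1, h2, h3, h4, h5]
    simp [n1, n2]
    try norm_num

/-- One elimination round: whoever wins after deleting a lowest-scoring candidate `c` wins. -/
theorem mem_winnersAux_succ {C N : Type*} [DecidableEq C] [Fintype N] {s : List ℕ → ℕ → ℝ}
    {P : N → WeakOrder C} {n : ℕ} {A B : Finset C} {x c : C} (hA : 1 < A.card)
    (hc : c ∈ lowest s P A) (hB : A.erase c = B) (hx : x ∈ winnersAux s P n B) :
    x ∈ winnersAux s P (n + 1) A := by
  subst hB
  rw [winnersAux, if_neg (by omega), Finset.mem_biUnion]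
  exact ⟨c, hc, hx⟩

theorem three_mem_winners : (3 : Fin 4) ∈ winners splitScoring majProfile Finset.univ := by
  obtain ⟨u0, u1, u2, u3⟩ := scores_univ
  obtain ⟨v1, v2, v3⟩ := scores_bcd
  obtain ⟨w2, w3⟩ := scores_cd
  have hcard : (Finset.univ : Finset (Fin 4)).card = 3 + 1 := by simp
  rw [winners, hcard]
  refine mem_winnersAux_succ (c := 0) (B := {1, 2, 3}) (by simp) ?_ ?_ ?_
  · simp only [lowest, Finset.mem_filter, Finset.mem_univ, true_and, forall_true_left]
    intro d
    fin_cases d <;> simp [u0, u1, u2, u3] <;> norm_num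
  · ext x; fin_cases x <;> simp
  refine mem_winnersAux_succ (c := 1) (B := {2, 3}) (by simp) ?_ ?_ ?_
  · simp [lowest, v1, v2, v3]; norm_num
  · ext x; fin_cases x <;> simp
  refine mem_winnersAux_succ (c := 2) (B := {3}) (by simp) ?_ ?_ ?_
  · simp [lowest, w2, w3]; norm_num
  · ext x; fin_cases x <;> simp
  simp [winnersAux]

theorem majority_topSet {i : Fin 37} (hi : i.val < 19) :
    (majProfile i).topSet Finset.univ = {0, 1, 2} ∨
    (majProfile i).topSet Finset.univ = {0, 1} ∨
    (majProfile i).topSet Finset.univ = {0, 2} := by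
  obtain ⟨h1, h2, h3, -, -⟩ := topSet_univ
  unfold majProfile
  split_ifs
  · exact Or.inl h1
  · exact Or.inr (Or.inl h2)
  · exact Or.inr (Or.inr h3)

/-- Split-IRV does not respect cohesive majorities: in
`majProfile`, the 19 voters of the first three groups form a majority all
ranking `a = 0` in their top indifference class, the union of their top sets is
`{a, b, c} = {0, 1, 2}`, yet `d = 3` is a Split-IRV winner. -/
theorem splitIRV_fails_cohesive_majorities :
    let S : Finset (Fin 37) := Finset.univ.filter fun i => i.val < 19
    Fintype.card (Fin 37) < 2 * S.card ∧
    (∀ i ∈ S, (0 : Fin 4) ∈ (majProfile i).topSet Finset.univ) ∧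
    (S.biUnion fun i => (majProfile i).topSet Finset.univ) = {0, 1, 2} ∧
    (3 : Fin 4) ∈ winners splitScoring majProfile Finset.univ ∧
    ¬ (winners splitScoring majProfile Finset.univ ⊆
        S.biUnion fun i => (majProfile i).topSet Finset.univ) := by
  intro S
  have hS : ∀ i, i ∈ S ↔ i.val < 19 := fun i => by simp [S]
  have hunion : (S.biUnion fun i => (majProfile i).topSet Finset.univ) = {0, 1, 2} := by
    apply Finset.Subset.antisymm
    · refine Finset.biUnion_subset.2 fun i hi => ?_
      rcases majority_topSet ((hS i).1 hi) with h | h | h <;> rw [h] <;> intro x <;>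
        fin_cases x <;> simp
    · -- Voter `0` alone already has top set `{0, 1, 2}`.
      have h0 : (majProfile 0).topSet Finset.univ = {0, 1, 2} := topSet_univ.1
      rw [← h0]
      exact Finset.subset_biUnion_of_mem (fun i => (majProfile i).topSet Finset.univ)
        ((hS 0).2 (by simp))
  refine ⟨?_, fun i hi => ?_, hunion, three_mem_winners, fun h => ?_⟩
  · have hcard : S.card = 19 := by
      have hIio : S = Finset.Iio (19 : Fin 37) := by
        ext i
        rw [hS, Finset.mem_Iio]
        rfl
      rw [hIio, Fin.card_Iio]
      rfl
    rw [hcard, Fintype.card_fin]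
    norm_num
  · rcases majority_topSet ((hS i).1 hi) with h | h | h <;> rw [h] <;> simp
  · have h3 := h three_mem_winners
    rw [hunion] at h3
    simp at h3
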